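/- Let Ω ⊂ ℝ^d be a nonempty bounded open set, let T : ℝ^d → ℝ be continuous on the closure cl(Ω) and twice differentiable at every point of Ω, let k : ℝ → ℝ be differentiable, and let f : ℝ^d → ℝ. Assume that for every x ∈ Ω one has k(T(x)) > 0, f(x) > 0, and the stationary heat equation with temperature-dependent conductivity holds in expanded form: k'(T(x))·‖∇T(x)‖² + k(T(x))·ΔT(x) = -f(x). Then the minimum of T over cl(Ω) is attained on the boundary: there exists y ∈ ∂Ω such that T(y) ≤ T(x) for all x ∈ cl(Ω). -/

import Mathlib

open Set

/-- The Laplacian of `T : ℝ^d → ℝ` at `x`: the sum of second directional derivatives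
along the standard orthonormal basis of `EuclideanSpace ℝ (Fin d)`. -/
noncomputable def laplacian {d : ℕ} (T : EuclideanSpace ℝ (Fin d) → ℝ)
    (x : EuclideanSpace ℝ (Fin d)) : ℝ :=
  ∑ i : Fin d,
    fderiv ℝ (fun y => fderiv ℝ T y (EuclideanSpace.single i 1)) x (EuclideanSpace.single i 1)

theorem second_deriv_nonneg_of_isLocalMin {g : ℝ → ℝ} {a : ℝ} (h : IsLocalMin g a)
    (hc : ContinuousAt g a) : 0 ≤ deriv (deriv g) a := by
  by_contra hneg
  push Not at hneg
  have hmax : IsLocalMax g a := isLocalMax_of_deriv_deriv_neg hneg h.deriv_eq_zero hc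
  have hconst : g =ᶠ[nhds a] fun _ => g a := by
    filter_upwards [h, hmax] with t h1 h2 using le_antisymm h2 h1
  have h2 := hconst.deriv.deriv_eq
  simp at h2
  linarith

theorem fderiv_fderiv_nonneg_of_isLocalMin {E : Type*} [NormedAddCommGroup E] [NormedSpace ℝ E]
    {T : E → ℝ} {x : E} (e : E) (h : IsLocalMin T x)
    (hd : ∀ᶠ y in nhds x, DifferentiableAt ℝ T y) (hd2 : DifferentiableAt ℝ (fderiv ℝ T) x) :
    0 ≤ fderiv ℝ (fun y => fderiv ℝ T y e) x e := by
  have hl : ∀ t : ℝ, HasDerivAt (fun t : ℝ => x + t • e) e t := fun t => by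
    simpa using ((hasDerivAt_id t).smul_const e).const_add x
  have ht : Filter.Tendsto (fun t : ℝ => x + t • e) (nhds 0) (nhds x) := by
    have := (hl 0).continuousAt.tendsto
    simpa using this
  have hmin : IsLocalMin (fun t : ℝ => T (x + t • e)) 0 := by
    have := ht.eventually h
    filter_upwards [this] with t h1
    simpa using h1
  have hder : deriv (fun t : ℝ => T (x + t • e)) =ᶠ[nhds 0]
      fun t => fderiv ℝ T (x + t • e) e := by
    filter_upwards [ht.eventually hd] with t h1
    exact (h1.hasFDerivAt.comp_hasDerivAt t (hl t)).deriv
  have hc : ContinuousAt (fun t : ℝ => T (x + t • e)) 0 := by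
    have h1 : ContinuousAt T (x + (0 : ℝ) • e) := by simpa using hd.self_of_nhds.continuousAt
    exact ContinuousAt.comp (f := fun t : ℝ => x + t • e) h1 (hl 0).continuousAt
  have key := second_deriv_nonneg_of_isLocalMin hmin hc
  rw [hder.deriv_eq] at key
  have h3 : DifferentiableAt ℝ (fun y => fderiv ℝ T y e) (x + (0 : ℝ) • e) := by
    simpa using hd2.clm_apply (differentiableAt_const e)
  have h4 := (h3.hasFDerivAt.comp_hasDerivAt (0 : ℝ) (hl 0)).deriv
  have h5 : deriv (fun t : ℝ => fderiv ℝ T (x + t • e) e) 0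
    = fderiv ℝ (fun y => fderiv ℝ T y e) (x + (0 : ℝ) • e) e := h4
  rw [h5] at key
  simpa using key

/-- Minimum principle for the stationary heat equation with temperature-dependent
conductivity: if `k(T) > 0`, `f > 0` and
`k'(T)‖∇T‖² + k(T)ΔT = -f` on a nonempty bounded open set `Ω`, then the minimum of
`T` over `cl(Ω)` is attained on the boundary `cl(Ω) \ Ω`. -/
theorem minimum_principle_temperature_dependent_conductivity
    {d : ℕ} {Ω : Set (EuclideanSpace ℝ (Fin d))}
    (hΩne : Ω.Nonempty) (hΩopen : IsOpen Ω) (hΩbdd : Bornology.IsBounded Ω)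
    {T : EuclideanSpace ℝ (Fin d) → ℝ} {k : ℝ → ℝ} {f : EuclideanSpace ℝ (Fin d) → ℝ}
    (hTcont : ContinuousOn T (closure Ω))
    (hT2 : ∀ x ∈ Ω, DifferentiableAt ℝ T x ∧ DifferentiableAt ℝ (fderiv ℝ T) x)
    (hk : Differentiable ℝ k)
    (hkpos : ∀ x ∈ Ω, 0 < k (T x))
    (hfpos : ∀ x ∈ Ω, 0 < f x)
    (heq : ∀ x ∈ Ω,
      deriv k (T x) * ‖gradient T x‖ ^ 2 + k (T x) * laplacian T x = -f x) :
    ∃ y ∈ closure Ω \ Ω, ∀ x ∈ closure Ω, T y ≤ T x := by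
  obtain ⟨y, hy, hmin⟩ := (hΩbdd.isCompact_closure).exists_isMinOn hΩne.closure hTcont
  refine ⟨y, ⟨hy, fun hyΩ => ?_⟩, fun x hx => hmin hx⟩
  have hloc : IsLocalMin T y := by
    filter_upwards [hΩopen.mem_nhds hyΩ] with z hz using hmin (subset_closure hz)
  have hg : gradient T y = 0 := by
    simp [gradient, hloc.fderiv_eq_zero]
  have hlap : 0 ≤ laplacian T y := Finset.sum_nonneg fun i _ =>
    fderiv_fderiv_nonneg_of_isLocalMin _ hloc
      (Filter.eventually_of_mem (hΩopen.mem_nhds hyΩ) fun z hz => (hT2 z hz).1) (hT2 y hyΩ).2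
  have h1 := heq y hyΩ
  rw [hg] at h1
  have h2 := mul_nonneg (hkpos y hyΩ).le hlap
  have h3 := hfpos y hyΩ
  simp at h1
  linarith
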